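/- arXiv:2502.06462 — 2 statements merged into one kernel-verified Lean document; each statement's English description precedes it below -/
import Mathlib

section
/- Let p, q, s be natural numbers with q ≤ s ≤ p. Let a be a real p×q matrix with rank a = q, let a⊥ be a real p×(p−q) matrix with rank a⊥ = p−q and aᵀ·a⊥ = 0, and let ψ be a real p×s matrix with rank ψ = s. Then the following three conditions are equivalent: (1) the column space of a is contained in the column space of ψ; (2) there exist an invertible real s×s matrix R and a real (p−q)×(s−q) matrix φ with rank φ = s−q such that ψ·R equals the p×s matrix whose first q columns are the columns of a and whose last s−q columns are the columns of a⊥·φ; (3) rank(aᵀ·ψ) = q and rank(a⊥ᵀ·ψ) = s−q. -/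
/-!
The hypotheses force `col a = ker aperpᵀ` and `col aperp = ker aᵀ` (each inclusion follows from
`aᵀ * aperp = 0`, and the dimensions agree: `range_eq_ker_of_mul_eq_zero`). Since `ψ` is injective,
`ker (aperpᵀ * ψ) = ψ⁻¹(col a)` has the dimension of `col a ∩ col ψ`, so that
`rank (aperpᵀ * ψ) + dim (col a ∩ col ψ) = s` (`rank_mul_add_finrank_inf`). Hence
`rank (aperpᵀ * ψ) = s - q` exactly when `col a ∩ col ψ = col a`, i.e. `col a ⊆ col ψ`.

If `col a ⊆ col ψ`, write `a = ψ * B`. Then `(aᵀ * ψ) * B = aᵀ * a` has rank `q`, so `aᵀ * ψ` has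
rank `q` and its kernel has dimension `s - q`. With `C` a matrix whose columns are a basis of that
kernel, the columns of `ψ * C` lie in `ker aᵀ = col aperp`, whence `ψ * C = aperp * φ`. The matrix
`R = [B C]` then satisfies `ψ * R = [a, aperp * φ]`; it is invertible because the right-hand side
is injective, its two blocks being injective and mutually orthogonal.
-/

open Matrix

section helpers

variable {k l m n : Type*} [Fintype l] [Fintype n]

theorem rank_add_finrank_ker (M : Matrix m n ℝ) :
    M.rank + Module.finrank ℝ (LinearMap.ker M.mulVecLin) = Fintype.card n := by
  have := LinearMap.finrank_range_add_finrank_ker M.mulVecLin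
  rwa [Module.finrank_fintype_fun_eq_card] at this

theorem rank_eq_card_iff_mulVec_injective (M : Matrix m n ℝ) :
    M.rank = Fintype.card n ↔ Function.Injective M.mulVec := by
  have h := rank_add_finrank_ker M
  have h2 : Function.Injective M.mulVec ↔ LinearMap.ker M.mulVecLin = ⊥ :=
    (LinearMap.ker_eq_bot (f := M.mulVecLin)).symm
  rw [h2, ← Submodule.finrank_eq_zero (R := ℝ)]
  omega

/-- If `M * N = 0` and the ranks add up to the middle dimension, the sequence `N`, `M` is exact. -/
theorem range_eq_ker_of_mul_eq_zero [Fintype m] (M : Matrix k m ℝ) (N : Matrix m l ℝ) (h0 : M * N = 0)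
    (hr : M.rank + N.rank = Fintype.card m) :
    LinearMap.range N.mulVecLin = LinearMap.ker M.mulVecLin := by
  apply Submodule.eq_of_le_of_finrank_eq
  · rintro _ ⟨x, rfl⟩
    simp [Matrix.mulVec_mulVec, h0]
  · have := rank_add_finrank_ker M
    change N.rank = _
    omega

theorem exists_eq_mul_of_range_le (M : Matrix m l ℝ) (N : Matrix m n ℝ)
    (h : LinearMap.range M.mulVecLin ≤ LinearMap.range N.mulVecLin) :
    ∃ B : Matrix n l ℝ, M = N * B := by
  classical
  have hcol : ∀ j, ∃ b : n → ℝ, N *ᵥ b = M.col j := fun j =>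
    h ⟨Pi.single j 1, by simp⟩
  choose b hb using hcol
  refine ⟨Matrix.of fun i j => b j i, ?_⟩
  ext i j
  exact (congrFun (hb j) i).symm

theorem exists_ker_basis_matrix [Fintype m] (D : Matrix k m ℝ) (t : ℕ) (ht : D.rank + t = Fintype.card m) :
    ∃ C : Matrix m (Fin t) ℝ, D * C = 0 ∧ C.rank = t := by
  have hf : Module.finrank ℝ (LinearMap.ker D.mulVecLin) = t := by
    have := rank_add_finrank_ker D
    omega
  let b := Module.finBasisOfFinrankEq ℝ _ hf
  refine ⟨(Matrix.of fun j => (b j : m → ℝ))ᵀ, ?_, ?_⟩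
  · ext i j
    exact congrFun (LinearMap.mem_ker.1 (b j).2) i
  · rw [Matrix.rank_transpose]
    have hli : LinearIndependent ℝ (fun j => (b j : m → ℝ)) :=
      b.linearIndependent.map' (Submodule.subtype _) (Submodule.ker_subtype _)
    simpa using LinearIndependent.rank_matrix (M := Matrix.of fun j => (b j : m → ℝ)) hli

/-- If `ker N = col a` and `ψ` is injective, then `ψ` identifies `ker (N * ψ)` with
`col a ∩ col ψ`; this is rank-nullity for `N * ψ`. -/
theorem rank_mul_add_finrank_inf [Fintype m] (N : Matrix k m ℝ) (a : Matrix m l ℝ) (ψ : Matrix m n ℝ)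
    (hN : LinearMap.range a.mulVecLin = LinearMap.ker N.mulVecLin)
    (hψ : Function.Injective ψ.mulVec) :
    (N * ψ).rank + Module.finrank ℝ
      ↥(LinearMap.range a.mulVecLin ⊓ LinearMap.range ψ.mulVecLin) = Fintype.card n := by
  rw [← rank_add_finrank_ker (N * ψ), Matrix.mulVecLin_mul, LinearMap.ker_comp, ← hN,
    inf_comm, ← Submodule.map_comap_eq]
  congr 1
  exact ((Submodule.equivMapOfInjective ψ.mulVecLin hψ _).finrank_eq).symm

/-- Two injective matrices with mutually orthogonal columns form an injective block matrix. -/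
theorem fromCols_mulVec_injective [Fintype k] [Fintype m]
    (a : Matrix m k ℝ) (b : Matrix m l ℝ) (h : aᵀ * b = 0)
    (ha : Function.Injective a.mulVec) (hb : Function.Injective b.mulVec) :
    Function.Injective (Matrix.fromCols a b).mulVec := by
  refine (injective_iff_map_eq_zero (Matrix.fromCols a b).mulVecLin).2 fun v hv => ?_
  obtain ⟨x, y, rfl⟩ : ∃ x y, v = Sum.elim x y :=
    ⟨v ∘ Sum.inl, v ∘ Sum.inr, (Sum.elim_comp_inl_inr v).symm⟩
  have hv' : a *ᵥ x + b *ᵥ y = 0 := by simpa [Matrix.fromCols_mulVec] using hv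
  have hx : a *ᵥ x = 0 := by
    have h1 := congrArg (aᵀ *ᵥ ·) hv'
    simp only [Matrix.mulVec_add, Matrix.mulVec_mulVec, h, Matrix.zero_mulVec, add_zero,
      Matrix.mulVec_zero] at h1
    rw [← Matrix.conjTranspose_eq_transpose_of_trivial] at h1
    exact (Matrix.conjTranspose_mul_self_mulVec_eq_zero a x).1 h1
  rw [hx, zero_add] at hv'
  have hx0 : x = 0 := ha (by simpa using hx)
  have hy0 : y = 0 := hb (by simpa using hv')
  subst hx0 hy0
  exact Sum.elim_zero_zero

end helpers

/-- Theorem 4.1 (iii)⇔(iv) of Franchi–Paruolo: equivalence of formulations of the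
hypothesis `col a ⊆ col ψ`. -/
theorem stmt1 (p q s : ℕ) (hqs : q ≤ s) (hsp : s ≤ p)
    (a : Matrix (Fin p) (Fin q) ℝ) (ha : a.rank = q)
    (aperp : Matrix (Fin p) (Fin (p - q)) ℝ) (haperp : aperp.rank = p - q)
    (horth : aᵀ * aperp = 0)
    (ψ : Matrix (Fin p) (Fin s) ℝ) (hψ : ψ.rank = s) :
    [LinearMap.range a.mulVecLin ≤ LinearMap.range ψ.mulVecLin,
     ∃ (R : Matrix (Fin s) (Fin s) ℝ) (φ : Matrix (Fin (p - q)) (Fin (s - q)) ℝ),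
       IsUnit R ∧ φ.rank = s - q ∧
       ψ * R = Matrix.of (fun i (j : Fin s) =>
         if h : (j : ℕ) < q then a i ⟨(j : ℕ), h⟩
         else (aperp * φ) i ⟨(j : ℕ) - q, by have := j.isLt; omega⟩),
     (aᵀ * ψ).rank = q ∧ (aperpᵀ * ψ).rank = s - q].TFAE := by
  have hψi : Function.Injective ψ.mulVec :=
    (rank_eq_card_iff_mulVec_injective ψ).1 (by simpa using hψ)
  have hai : Function.Injective a.mulVec :=
    (rank_eq_card_iff_mulVec_injective a).1 (by simpa using ha)
  have horth' : aperpᵀ * a = 0 := by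
    simpa using congrArg Matrix.transpose horth
  have hker : LinearMap.range a.mulVecLin = LinearMap.ker aperpᵀ.mulVecLin :=
    range_eq_ker_of_mul_eq_zero _ _ horth' (by
      rw [Matrix.rank_transpose, ha, haperp, Fintype.card_fin]; omega)
  have hker' : LinearMap.range aperp.mulVecLin = LinearMap.ker aᵀ.mulVecLin :=
    range_eq_ker_of_mul_eq_zero _ _ horth (by
      rw [Matrix.rank_transpose, ha, haperp, Fintype.card_fin]; omega)
  have hdim := rank_mul_add_finrank_inf _ _ _ hker hψi
  rw [Fintype.card_fin] at hdim
  have ha' : Module.finrank ℝ (LinearMap.range a.mulVecLin) = q := ha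
  have h13 : LinearMap.range a.mulVecLin ≤ LinearMap.range ψ.mulVecLin →
      (aᵀ * ψ).rank = q ∧ (aperpᵀ * ψ).rank = s - q := by
    intro h
    rw [inf_eq_left.2 h, ha'] at hdim
    refine ⟨le_antisymm ?_ ?_, by omega⟩
    · simpa using Matrix.rank_le_card_height (aᵀ * ψ)
    · obtain ⟨B, hB⟩ := exists_eq_mul_of_range_le _ _ h
      calc q = (aᵀ * a).rank := by rw [Matrix.rank_transpose_mul_self, ha]
        _ = (aᵀ * ψ * B).rank := by rw [Matrix.mul_assoc, ← hB]
        _ ≤ _ := Matrix.rank_mul_le_left _ _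
  tfae_have 1 → 3 := h13
  tfae_have 3 → 1 := by
    rintro ⟨-, h⟩
    exact inf_eq_left.1 (Submodule.eq_of_le_of_finrank_eq inf_le_left (by omega))
  tfae_have 2 → 1 := by
    rintro ⟨R, φ, -, -, hR⟩
    have haR : a = ψ * R.submatrix id (Fin.castLE hqs) := by
      ext i j
      have := congrFun (congrFun hR i) (Fin.castLE hqs j)
      simpa [Matrix.mul_apply] using this.symm
    rw [haR, Matrix.mulVecLin_mul]
    exact LinearMap.range_comp_le_range _ _
  tfae_have 1 → 2 := by
    intro h
    obtain ⟨B, hB⟩ := exists_eq_mul_of_range_le _ _ h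
    obtain ⟨C, hC, hCr⟩ := exists_ker_basis_matrix (aᵀ * ψ) (s - q) (by
      rw [(h13 h).1, Fintype.card_fin]; omega)
    have hCi : Function.Injective C.mulVec :=
      (rank_eq_card_iff_mulVec_injective C).1 (by simpa using hCr)
    have hψC : Function.Injective (ψ * C).mulVec := by
      intro x y hxy
      simp only [← Matrix.mulVec_mulVec] at hxy
      exact hCi (hψi hxy)
    rw [Matrix.mul_assoc] at hC
    obtain ⟨φ, hφ⟩ := exists_eq_mul_of_range_le (ψ * C) aperp (by
      rw [hker']
      rintro _ ⟨x, rfl⟩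
      simp only [Matrix.mulVecLin_apply, LinearMap.mem_ker, Matrix.mulVec_mulVec, hC,
        Matrix.zero_mulVec])
    have hcols : ψ * Matrix.fromCols B C = Matrix.fromCols a (ψ * C) := by
      rw [Matrix.mul_fromCols, ← hB]
    have hBC : Function.Injective (Matrix.fromCols B C).mulVec := by
      have := fromCols_mulVec_injective a (ψ * C) hC hai hψC
      intro x y hxy
      apply this
      simp only [← hcols, ← Matrix.mulVec_mulVec, hxy]
    -- `finSumFinEquiv` lists the first `q` columns, then the other `s - q`, as in the `dite`.
    let e : Fin q ⊕ Fin (s - q) ≃ Fin s := finSumFinEquiv.trans (finCongr (by omega))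
    refine ⟨(Matrix.fromCols B C).submatrix id e.symm, φ, ?_, ?_, ?_⟩
    · rw [← Matrix.mulVec_injective_iff_isUnit]
      intro x y hxy
      have hxy' := hBC (a₁ := x ∘ e) (a₂ := y ∘ e) (by
        simpa [Matrix.submatrix_mulVec_equiv] using hxy)
      exact e.surjective.injective_comp_right hxy'
    · have hφi : Function.Injective φ.mulVec := by
        intro x y hxy
        apply hψC
        simp only [hφ, ← Matrix.mulVec_mulVec, hxy]
      simpa using (rank_eq_card_iff_mulVec_injective φ).2 hφi
    · have hsub : ψ * (Matrix.fromCols B C).submatrix id e.symm =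
          (Matrix.fromCols a (aperp * φ)).submatrix id e.symm := by
        rw [← hφ, ← hcols]
        rfl
      rw [hsub]
      ext i j
      obtain ⟨j, rfl⟩ := e.surjective j
      rcases j with j | j
      · simp [e]
      · simp [e]
  tfae_finish
end

section
/- For j ∈ ℕ define η_j := (−1)^j·(binomial(2j, j))/4^j (the generalized binomial coefficient binom(−1/2, j)) and a_j := 2j + 1/2. Let (Ω, 𝓕, P) be a probability space and let S : Ω → ℝ be a random variable with P(S ≤ 0) = 0 whose law has density f_S with respect to Lebesgue measure, where f_S(s) = (s^{−3/2}/√π)·Σ_{j=0}^∞ η_j·a_j·exp(−a_j²/(2s)) for s > 0 and f_S(s) = 0 for s ≤ 0. Then for every z > 0, the cumulative distribution function of ζ := 1/S satisfies P(1/S ≤ z) = 1 − √(2/π)·Σ_{j=0}^∞ η_j·∫_{a_j²·z/2}^∞ x^{−1/2}·e^{−x} dx. -/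
/-!
Up to the change of event `{1/S ≤ z} = {0 < S < 1/z}ᶜ`, the claim is the evaluation of
`∫ f_S` over `(0, 1/z)`. On this interval the series for `f_S` may be integrated termwise:
the substitution `x = a_j² / (2s)` turns the `j`-th term into `√(2/π) η_j Γ(1/2, a_j² z / 2)`
(`fTerm_subst`), and these are absolutely summable because `|η_j| ≤ 1` and
`Γ(1/2, t) ≤ Γ(3/2) / t` (`summable_tail`). This gives `fS_integral`.

The law in the hypothesis has density `max(f_S, 0)`, since `ENNReal.ofReal` truncates, so some
positivity of `f_S` is needed. It does not have to be proved from the series: the mass of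
`max(f_S, 0)` is one by hypothesis, so it suffices that `∫ f_S` over `(0, 1/z)` tends to one as
`z → 0⁺` (`tendsto_gammaSeries`); then the negative part of `f_S` has mass zero (`lintegral_fS`).

For that limit, `Σ_j η_j Γ(1/2, a_j² z / 2)` is rewritten as the integral over `(0, ∞)` of
`x^{-1/2} e^{-x}` times the partial sum of `η_j` over those `j` with `a_j² z / 2 < x`. As `z → 0⁺`
these partial sums stay bounded and tend to `Σ η_j = (1 + 1)^{-1/2}`. This is the binomial series
at the boundary point `1`, obtained from Abel's theorem and the alternating series test
(`tendsto_sum_eta`). By dominated convergence the limit is `√(2/π) · √π / √2 = 1`.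
-/

open MeasureTheory Real

/-- `η_j = binom(−1/2, j) = (−1)^j (2j choose j) / 4^j`. -/
noncomputable def eta (j : ℕ) : ℝ := (-1) ^ j * (Nat.choose (2 * j) j) / 4 ^ j

/-- `a_j = 2j + 1/2`. -/
noncomputable def aC (j : ℕ) : ℝ := 2 * j + 1 / 2

/-- Density of `S = ∫₀¹ B(u)² du` (Abadir–Paruolo formula). -/
noncomputable def fS (s : ℝ) : ℝ :=
  if 0 < s then
    (s ^ (-(3 : ℝ) / 2) / Real.sqrt π) *
      ∑' j : ℕ, eta j * aC j * Real.exp (-(aC j) ^ 2 / (2 * s))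
  else 0

open Set Filter Topology

/-! ### The binomial series of `(1 + x)^{-1/2}` at `x = 1` -/

lemma eta_succ (j : ℕ) : (2 * j + 2 : ℝ) * eta (j + 1) = -(2 * j + 1) * eta j := by
  have h := Nat.succ_mul_centralBinom_succ j
  have h' : ((j : ℝ) + 1) * ((2 * (j + 1)).choose (j + 1) : ℝ)
      = 2 * (2 * j + 1) * ((2 * j).choose j : ℝ) := by
    simp only [Nat.centralBinom] at h
    exact_mod_cast h
  unfold eta
  rw [pow_succ, pow_succ]
  field_simp
  linear_combination -2 * h'

lemma eta_eq_choose (j : ℕ) : Ring.choose (-(1 : ℝ) / 2) j = eta j := by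
  induction j with
  | zero => simp [eta]
  | succ n ih =>
    have hs : ((n : ℝ) + 1) * Ring.choose (-(1 : ℝ) / 2) (n + 1)
        = (-(1 : ℝ) / 2 - n) * Ring.choose (-(1 : ℝ) / 2) n := by
      rw [Ring.choose_eq_smul, Ring.choose_eq_smul, descPochhammer_succ_right,
        Polynomial.smeval_mul, Nat.factorial_succ]
      have : (n.factorial : ℝ) ≠ 0 := by positivity
      simp [Polynomial.smeval_natCast]
      field_simp
    have := eta_succ n
    rw [ih] at hs
    have h0 : ((n : ℝ) + 1) ≠ 0 := by positivity
    apply mul_left_cancel₀ h0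
    linarith

lemma hasSum_eta_mul_pow {x : ℝ} (hx0 : 0 ≤ x) (hx : x < 1) :
    HasSum (fun j => eta j * x ^ j) ((1 + x) ^ (-(1 : ℝ) / 2)) := by
  have h := (Real.one_add_rpow_hasFPowerSeriesOnBall_zero (a := -(1 : ℝ) / 2)).hasSum (y := x)
    (by rw [← ENNReal.ofReal_one, Metric.eball_ofReal]; simpa [abs_of_nonneg hx0] using hx)
  simpa [binomialSeries_apply, eta_eq_choose, -FormalMultilinearSeries.apply_eq_prod_smul_coeff]
    using h

lemma abs_eta (j : ℕ) : |eta j| = ((2 * j).choose j : ℝ) / 4 ^ j := by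
  simp [eta, abs_div, abs_mul]

lemma eta_eq (j : ℕ) : eta j = (-1) ^ j * |eta j| := by
  rw [abs_eta, eta, mul_div_assoc]

lemma abs_eta_succ (j : ℕ) : |eta (j + 1)| = (2 * j + 1) / (2 * j + 2) * |eta j| := by
  have h : eta (j + 1) = -((2 * j + 1) / (2 * j + 2) * eta j) := by
    have := eta_succ j
    field_simp
    linarith
  rw [h, abs_neg, abs_mul, abs_of_nonneg (by positivity)]

lemma abs_eta_antitone : Antitone fun j => |eta j| := by
  refine antitone_nat_of_succ_le fun j => ?_
  rw [abs_eta_succ]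
  refine mul_le_of_le_one_left (abs_nonneg _) ?_
  rw [div_le_one (by positivity)]
  linarith

lemma abs_eta_le_one (j : ℕ) : |eta j| ≤ 1 := by
  simpa [eta] using abs_eta_antitone (Nat.zero_le j)

/-- The Wallis-type bound `η_j² (2j + 1) ≤ 1`, which forces `η_j → 0`. -/
lemma eta_sq_mul_le (j : ℕ) : |eta j| ^ 2 * (2 * j + 1) ≤ 1 := by
  induction j with
  | zero => simp [eta]
  | succ n ih =>
    rw [abs_eta_succ]
    refine le_trans ?_ ih
    have : ((2 * n + 1 : ℝ) / (2 * n + 2) * |eta n|) ^ 2 * (2 * (n + 1 : ℕ) + 1)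
        = (|eta n| ^ 2 * (2 * n + 1)) * ((2 * n + 1) * (2 * n + 3) / (2 * n + 2) ^ 2) := by
      push_cast
      field_simp
      ring
    rw [this]
    refine mul_le_of_le_one_right (by positivity) ?_
    rw [div_le_one (by positivity)]
    nlinarith

lemma tendsto_abs_eta : Tendsto (fun j => |eta j|) atTop (𝓝 0) := by
  have h : Tendsto (fun j => |eta j| ^ 2) atTop (𝓝 0) := by
    refine squeeze_zero (fun j => by positivity) (fun j => ?_) tendsto_one_div_add_atTop_nhds_zero_nat
    rw [le_div_iff₀ (by positivity)]
    refine le_trans ?_ (eta_sq_mul_le j)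
    gcongr
    linarith [(Nat.cast_nonneg j : (0 : ℝ) ≤ j)]
  have := h.sqrt
  simpa [Real.sqrt_sq_eq_abs] using this

/-- The conditionally convergent binomial series `∑ η_j = 2^{-1/2}`, by Abel's limit theorem. -/
lemma tendsto_sum_eta :
    Tendsto (fun n => ∑ j ∈ Finset.range n, eta j) atTop (𝓝 (√2)⁻¹) := by
  obtain ⟨l, hl⟩ := abs_eta_antitone.tendsto_alternating_series_of_tendsto_zero tendsto_abs_eta
  simp_rw [← eta_eq] at hl
  have habel := Real.tendsto_tsum_powerSeries_nhdsWithin_lt hl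
  have hcont : Tendsto (fun x : ℝ => (1 + x) ^ (-(1 : ℝ) / 2)) (𝓝[<] 1)
      (𝓝 ((1 + 1) ^ (-(1 : ℝ) / 2))) := by
    refine Tendsto.mono_left ?_ nhdsWithin_le_nhds
    exact ((continuousAt_const.add continuousAt_id).rpow_const (Or.inl (by norm_num)))
  have heq : (fun x : ℝ => ∑' j, eta j * x ^ j) =ᶠ[𝓝[<] 1]
      fun x : ℝ => (1 + x) ^ (-(1 : ℝ) / 2) := by
    filter_upwards [Ioo_mem_nhdsLT (show (0 : ℝ) < 1 by norm_num)] with x hx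
    exact (hasSum_eta_mul_pow hx.1.le hx.2).tsum_eq
  have := tendsto_nhds_unique (habel.congr' heq) hcont
  rw [this] at hl
  convert hl using 2
  rw [Real.sqrt_eq_rpow, ← Real.rpow_neg (by norm_num)]
  norm_num

/-! ### Termwise integration of the density -/

lemma integrable_tsum_of_summable_integral_norm {α : Type*} [MeasurableSpace α] {μ : Measure α}
    {F : ℕ → α → ℝ} (hF : ∀ i, Integrable (F i) μ)
    (hsum : Summable fun i => ∫ a, ‖F i a‖ ∂μ) :
    Integrable (fun a => ∑' i, F i a) μ := by
  have hfin : ∑' i, ∫⁻ a, ‖F i a‖ₑ ∂μ ≠ ⊤ := by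
    have (i : ℕ) : ∫⁻ a, ‖F i a‖ₑ ∂μ = ENNReal.ofReal (∫ a, ‖F i a‖ ∂μ) :=
      (ofReal_integral_norm_eq_lintegral_enorm (hF i)).symm
    simp_rw [this]
    exact hsum.tsum_ofReal_ne_top
  have hs : ∀ᵐ a ∂μ, Summable fun i => ‖F i a‖ :=
    summable_norm_of_tsum_eLpNorm_ne_top le_rfl (fun i => (hF i).1)
      (by simpa [eLpNorm_one_eq_lintegral_enorm] using hfin)
  refine ⟨aestronglyMeasurable_of_tendsto_ae atTop
    (f := fun n a => ∑ i ∈ Finset.range n, F i a) (fun n => ?_) ?_, ?_⟩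
  · exact (integrable_finsetSum _ fun i _ => hF i).1
  · filter_upwards [hs] with a ha using ha.of_norm.hasSum.tendsto_sum_nat
  · calc ∫⁻ a, ‖∑' i, F i a‖ₑ ∂μ ≤ ∫⁻ a, ∑' i, ‖F i a‖ₑ ∂μ :=
          lintegral_mono fun a => enorm_tsum_le_tsum_enorm
      _ = ∑' i, ∫⁻ a, ‖F i a‖ₑ ∂μ := lintegral_tsum fun i => (hF i).1.enorm
      _ < ⊤ := hfin.lt_top

/-- The integrand `x^{-1/2} e^{-x}` of `Γ(1/2, ·)`. -/
noncomputable def gammaW (x : ℝ) : ℝ := x ^ (-(1 : ℝ) / 2) * Real.exp (-x)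

lemma gammaW_nonneg {x : ℝ} (hx : 0 < x) : 0 ≤ gammaW x := by
  unfold gammaW; positivity

lemma integrableOn_gammaW : IntegrableOn gammaW (Ioi 0) := by
  have h := Real.GammaIntegral_convergent (s := 1 / 2) (by norm_num)
  refine h.congr_fun (fun x _ => ?_) measurableSet_Ioi
  simp only [gammaW]
  rw [mul_comm]
  norm_num

lemma integral_gammaW : ∫ x in Ioi 0, gammaW x = √π := by
  rw [← Real.Gamma_one_half_eq, Real.Gamma_eq_integral (by norm_num)]
  refine setIntegral_congr_fun measurableSet_Ioi fun x _ => ?_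
  simp only [gammaW]
  rw [mul_comm]
  norm_num

lemma integrableOn_gammaW_Ioi {t : ℝ} (ht : 0 ≤ t) : IntegrableOn gammaW (Ioi t) :=
  integrableOn_gammaW.mono_set (Ioi_subset_Ioi ht)

lemma tail_nonneg {t : ℝ} (ht : 0 ≤ t) : 0 ≤ ∫ x in Ioi t, gammaW x :=
  setIntegral_nonneg measurableSet_Ioi fun _ hx => gammaW_nonneg (ht.trans_lt hx)

/-- A Markov-type tail bound; quadratic decay in `a_j` is all that summability needs. -/
lemma tail_le {t : ℝ} (ht : 0 < t) : ∫ x in Ioi t, gammaW x ≤ Real.Gamma (3 / 2) / t := by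
  have hint : IntegrableOn (fun x => Real.exp (-x) * x ^ ((3 / 2 : ℝ) - 1)) (Ioi 0) :=
    Real.GammaIntegral_convergent (by norm_num)
  rw [le_div_iff₀ ht, Real.Gamma_eq_integral (by norm_num), ← integral_mul_const]
  calc ∫ x in Ioi t, gammaW x * t
      ≤ ∫ x in Ioi t, Real.exp (-x) * x ^ ((3 / 2 : ℝ) - 1) := by
        refine setIntegral_mono_on ((integrableOn_gammaW_Ioi ht.le).mul_const t)
          (hint.mono_set (Ioi_subset_Ioi ht.le)) measurableSet_Ioi fun x hx => ?_
        have hx0 : 0 < x := ht.trans hx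
        have : Real.exp (-x) * x ^ ((3 / 2 : ℝ) - 1) = gammaW x * x := by
          rw [gammaW, show (3 / 2 : ℝ) - 1 = -1 / 2 + 1 by norm_num, Real.rpow_add_one hx0.ne']
          ring
        rw [this]
        exact mul_le_mul_of_nonneg_left (le_of_lt hx) (gammaW_nonneg hx0)
    _ ≤ ∫ x in Ioi 0, Real.exp (-x) * x ^ ((3 / 2 : ℝ) - 1) := by
        refine setIntegral_mono_set hint ?_ (Ioi_subset_Ioi ht.le).eventuallyLE
        filter_upwards [ae_restrict_mem measurableSet_Ioi] with x hx
        have : (0 : ℝ) < x := hx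
        simp only [Pi.zero_apply]
        positivity

lemma aC_pos (j : ℕ) : 0 < aC j := by unfold aC; positivity

lemma summable_tail {z : ℝ} (hz : 0 < z) :
    Summable fun j => |eta j| * ∫ x in Ioi (aC j ^ 2 * z / 2), gammaW x := by
  have hs : Summable fun j : ℕ => (8 * Real.Gamma (3 / 2) / z) * (1 / ((j + 1 : ℕ) : ℝ) ^ 2) :=
    ((summable_nat_add_iff 1).2 (Real.summable_one_div_nat_pow.2 one_lt_two)).mul_left _
  have hG : 0 < Real.Gamma (3 / 2) := Real.Gamma_pos_of_pos (by norm_num)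
  refine Summable.of_nonneg_of_le (fun j => ?_) (fun j => ?_) hs
  · exact mul_nonneg (abs_nonneg _) (tail_nonneg (by positivity))
  · have ha := aC_pos j
    have ht : 0 < aC j ^ 2 * z / 2 := by positivity
    have hj : ((j + 1 : ℕ) : ℝ) / 2 ≤ aC j := by
      unfold aC; push_cast; linarith [(Nat.cast_nonneg j : (0 : ℝ) ≤ j)]
    calc |eta j| * ∫ x in Ioi (aC j ^ 2 * z / 2), gammaW x
        ≤ ∫ x in Ioi (aC j ^ 2 * z / 2), gammaW x :=
          mul_le_of_le_one_left (tail_nonneg ht.le) (abs_eta_le_one j)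
      _ ≤ Real.Gamma (3 / 2) / (aC j ^ 2 * z / 2) := tail_le ht
      _ ≤ Real.Gamma (3 / 2) / ((((j + 1 : ℕ) : ℝ) / 2) ^ 2 * z / 2) := by gcongr
      _ = _ := by field_simp; ring

/-- The `j`-th term of the series for `f_S`, without the coefficient `η_j` and with `a` in place
of `a_j`. -/
noncomputable def fTerm (a s : ℝ) : ℝ :=
  s ^ (-(3 : ℝ) / 2) / √π * (a * Real.exp (-a ^ 2 / (2 * s)))

lemma image_subst {a z : ℝ} (ha : 0 < a) (hz : 0 < z) :
    (fun x => a ^ 2 / (2 * x)) '' Ioi (a ^ 2 * z / 2) = Ioo 0 z⁻¹ := by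
  ext s
  constructor
  · rintro ⟨x, hx, rfl⟩
    have hx' : a ^ 2 * z / 2 < x := hx
    have hx0 : 0 < x := lt_trans (by positivity) hx'
    refine ⟨by positivity, ?_⟩
    rw [div_lt_iff₀ (by positivity), ← div_eq_inv_mul, lt_div_iff₀ hz]
    linarith
  · rintro ⟨h0, h1⟩
    refine ⟨a ^ 2 / (2 * s), ?_, ?_⟩
    · simp only [mem_Ioi]
      rw [lt_div_iff₀ (by positivity)]
      have : s * z < 1 := by rwa [← lt_div_iff₀ hz, one_div]
      nlinarith [pow_pos ha 2]
    · field_simp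

/-- The substitution `s = a² / (2x)` turns `fTerm a s ds` into `√(2/π) x^{-1/2} e^{-x} dx`. -/
lemma jacobian_fTerm {a x : ℝ} (ha : 0 < a) (hx : 0 < x) :
    |-(a ^ 2) / (2 * x ^ 2)| • fTerm a (a ^ 2 / (2 * x)) = √(2 / π) * gammaW x := by
  have h1 : (a ^ 2 / (2 * x)) ^ (-(3 : ℝ) / 2) = (2 * x / a ^ 2) * (√2 * √x / a) := by
    rw [show a ^ 2 / (2 * x) = (2 * x / a ^ 2)⁻¹ by rw [inv_div], Real.inv_rpow (by positivity),
      ← Real.rpow_neg (by positivity), show -(-(3 : ℝ) / 2) = 1 + 1 / 2 by norm_num,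
      Real.rpow_add (by positivity), Real.rpow_one, ← Real.sqrt_eq_rpow,
      Real.sqrt_div (by positivity), Real.sqrt_sq ha.le, Real.sqrt_mul (by norm_num)]
  have h2 : x ^ (-(1 : ℝ) / 2) = (√x)⁻¹ := by
    rw [Real.sqrt_eq_rpow, ← Real.rpow_neg hx.le]; norm_num
  have h3 : -a ^ 2 / (2 * (a ^ 2 / (2 * x))) = -x := by field_simp
  have hsx : √x ^ 2 = x := Real.sq_sqrt hx.le
  rw [fTerm, gammaW, h1, h2, h3, neg_div, abs_neg, abs_of_pos (by positivity),
    Real.sqrt_div (by norm_num), smul_eq_mul]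
  have : 0 < √x := Real.sqrt_pos.2 hx
  field_simp
  rw [hsx]

lemma fTerm_subst {a z : ℝ} (ha : 0 < a) (hz : 0 < z) :
    IntegrableOn (fTerm a) (Ioo 0 z⁻¹) ∧
      ∫ s in Ioo 0 z⁻¹, fTerm a s = √(2 / π) * ∫ x in Ioi (a ^ 2 * z / 2), gammaW x := by
  have ht : 0 < a ^ 2 * z / 2 := by positivity
  have hd : ∀ x ∈ Ioi (a ^ 2 * z / 2), HasDerivWithinAt (fun x => a ^ 2 / (2 * x))
      (-(a ^ 2) / (2 * x ^ 2)) (Ioi (a ^ 2 * z / 2)) x := by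
    intro x hx
    have hx0 : x ≠ 0 := (ht.trans hx).ne'
    have := ((hasDerivAt_inv hx0).const_mul (a ^ 2 / 2)).hasDerivWithinAt
      (s := Ioi (a ^ 2 * z / 2))
    refine (this.congr_deriv ?_).congr_of_mem ?_ hx
    · field_simp
    · intro y _
      simp only [div_eq_mul_inv, mul_inv]
      ring
  have hinj : InjOn (fun x => a ^ 2 / (2 * x)) (Ioi (a ^ 2 * z / 2)) := by
    intro x hx y hy h
    have hx0 : 0 < x := ht.trans hx
    have hy0 : 0 < y := ht.trans hy
    simp only at h
    field_simp at h
    exact h.symm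
  have hj : EqOn (fun x => |-(a ^ 2) / (2 * x ^ 2)| • fTerm a (a ^ 2 / (2 * x)))
      (fun x => √(2 / π) * gammaW x) (Ioi (a ^ 2 * z / 2)) :=
    fun x hx => jacobian_fTerm ha (ht.trans hx)
  rw [← image_subst ha hz]
  constructor
  · rw [integrableOn_image_iff_integrableOn_abs_deriv_smul measurableSet_Ioi hd hinj]
    exact IntegrableOn.congr_fun ((integrableOn_gammaW_Ioi ht.le).const_mul _) hj.symm
      measurableSet_Ioi
  · rw [integral_image_eq_integral_abs_deriv_smul measurableSet_Ioi hd hinj,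
      setIntegral_congr_fun measurableSet_Ioi hj, integral_const_mul]

lemma fTerm_nonneg {a s : ℝ} (ha : 0 < a) (hs : 0 < s) : 0 ≤ fTerm a s := by
  unfold fTerm; positivity

lemma fS_eq {s : ℝ} (hs : 0 < s) : fS s = ∑' j, eta j * fTerm (aC j) s := by
  rw [fS, if_pos hs, ← tsum_mul_left]
  refine tsum_congr fun j => ?_
  rw [fTerm]
  ring

/-- The series `√(2/π) ∑ η_j Γ(1/2, a_j² z / 2)`, which is `P(1/S > z)`. -/
noncomputable def gammaSeries (z : ℝ) : ℝ :=
  √(2 / π) * ∑' j, eta j * ∫ x in Ioi (aC j ^ 2 * z / 2), gammaW x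

lemma fS_integral {z : ℝ} (hz : 0 < z) :
    IntegrableOn fS (Ioo 0 z⁻¹) ∧ ∫ s in Ioo 0 z⁻¹, fS s = gammaSeries z := by
  have hF : ∀ j, IntegrableOn (fun s => eta j * fTerm (aC j) s) (Ioo 0 z⁻¹) := fun j =>
    (fTerm_subst (aC_pos j) hz).1.const_mul _
  have hsum : Summable fun j => ∫ s in Ioo 0 z⁻¹, ‖eta j * fTerm (aC j) s‖ := by
    refine ((summable_tail hz).mul_left √(2 / π)).congr fun j => ?_
    rw [mul_left_comm, ← (fTerm_subst (aC_pos j) hz).2, ← integral_const_mul]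
    refine setIntegral_congr_fun measurableSet_Ioo fun s hs => ?_
    rw [norm_mul, Real.norm_eq_abs, Real.norm_of_nonneg (fTerm_nonneg (aC_pos j) hs.1)]
  have heq : EqOn (fun s => ∑' j, eta j * fTerm (aC j) s) fS (Ioo 0 z⁻¹) :=
    fun s hs => (fS_eq hs.1).symm
  constructor
  · exact IntegrableOn.congr_fun (integrable_tsum_of_summable_integral_norm hF hsum) heq
      measurableSet_Ioo
  · rw [← setIntegral_congr_fun measurableSet_Ioo heq,
      ← integral_tsum_of_summable_integral_norm hF hsum, gammaSeries, ← tsum_mul_left]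
    refine tsum_congr fun j => ?_
    rw [integral_const_mul, (fTerm_subst (aC_pos j) hz).2]
    ring

/-! ### Total mass of the density -/

lemma aC_cond_iff {x z : ℝ} (hz : 0 < z) (j : ℕ) :
    aC j ^ 2 * z / 2 < x ↔ j < ⌈(√(2 * x / z) - 1 / 2) / 2⌉₊ := by
  rw [Nat.lt_ceil, show aC j ^ 2 * z / 2 < x ↔ aC j ^ 2 < 2 * x / z by
    rw [lt_div_iff₀ hz, div_lt_iff₀ (by norm_num)]; constructor <;> intro h <;> linarith,
    ← Real.lt_sqrt (aC_pos j).le, aC]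
  constructor <;> intro h <;> linarith

/-- As `z → 0⁺` the cutoff `a_j² z / 2 < x` disappears, so the truncated sums of `η_j` run
through all partial sums of the binomial series. -/
lemma tendsto_cutoff {x : ℝ} (hx : 0 < x) :
    Tendsto (fun z : ℝ => ⌈(√(2 * x / z) - 1 / 2) / 2⌉₊) (𝓝[>] 0) atTop := by
  refine tendsto_nat_ceil_atTop.comp ?_
  refine Tendsto.atTop_div_const (by norm_num) ?_
  refine tendsto_atTop_add_const_right _ _ ?_
  exact Real.tendsto_sqrt_atTop.comp
    (tendsto_inv_nhdsGT_zero.const_mul_atTop (show 0 < 2 * x by positivity))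

lemma tsum_indicator_eq {x z : ℝ} (hz : 0 < z) :
    ∑' j, eta j * (Ioi (aC j ^ 2 * z / 2)).indicator gammaW x
      = (∑ j ∈ Finset.range ⌈(√(2 * x / z) - 1 / 2) / 2⌉₊, eta j) * gammaW x := by
  rw [tsum_eq_sum (s := Finset.range ⌈(√(2 * x / z) - 1 / 2) / 2⌉₊), Finset.sum_mul]
  · refine Finset.sum_congr rfl fun j hj => ?_
    rw [indicator_of_mem]
    exact (aC_cond_iff hz j).2 (Finset.mem_range.1 hj)
  · intro j hj
    rw [indicator_of_notMem, mul_zero]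
    exact fun h => hj (Finset.mem_range.2 ((aC_cond_iff hz j).1 h))

lemma gammaSeries_eq_integral {z : ℝ} (hz : 0 < z) :
    gammaSeries z = √(2 / π) * ∫ x in Ioi 0,
      (∑ j ∈ Finset.range ⌈(√(2 * x / z) - 1 / 2) / 2⌉₊, eta j) * gammaW x := by
  have hi (j : ℕ) : ∫ x in Ioi 0, (Ioi (aC j ^ 2 * z / 2)).indicator gammaW x
      = ∫ x in Ioi (aC j ^ 2 * z / 2), gammaW x := by
    rw [setIntegral_indicator measurableSet_Ioi, inter_eq_right.2]
    exact Ioi_subset_Ioi (by positivity)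
  have hF : ∀ j, IntegrableOn
      (fun x => eta j * (Ioi (aC j ^ 2 * z / 2)).indicator gammaW x) (Ioi 0) := fun j =>
    (integrableOn_gammaW.indicator measurableSet_Ioi).const_mul _
  have hsum : Summable fun j => ∫ x in Ioi 0,
      ‖eta j * (Ioi (aC j ^ 2 * z / 2)).indicator gammaW x‖ := by
    refine (summable_tail hz).congr fun j => ?_
    rw [← hi, ← integral_const_mul]
    refine setIntegral_congr_fun measurableSet_Ioi fun x hx => ?_
    rw [norm_mul, Real.norm_eq_abs, Real.norm_of_nonneg]
    exact indicator_apply_nonneg fun _ => gammaW_nonneg hx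
  rw [gammaSeries, ← setIntegral_congr_fun measurableSet_Ioi
      (fun x (_ : x ∈ Ioi 0) => tsum_indicator_eq hz),
    ← integral_tsum_of_summable_integral_norm hF hsum]
  congr 1
  refine tsum_congr fun j => ?_
  rw [integral_const_mul, hi]

/-- In view of `fS_integral`, this says that `f_S` has total mass one as an improper integral
at infinity. -/
lemma tendsto_gammaSeries : Tendsto gammaSeries (𝓝[>] 0) (𝓝 1) := by
  obtain ⟨C, hC⟩ := (Metric.isBounded_range_of_tendsto _ tendsto_sum_eta).exists_norm_le
  have hlim : Tendsto (fun z : ℝ => ∫ x in Ioi 0,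
      (∑ j ∈ Finset.range ⌈(√(2 * x / z) - 1 / 2) / 2⌉₊, eta j) * gammaW x) (𝓝[>] 0)
      (𝓝 (∫ x in Ioi 0, (√2)⁻¹ * gammaW x)) := by
    refine tendsto_integral_filter_of_dominated_convergence (fun x => C * gammaW x) ?_ ?_
      (integrableOn_gammaW.const_mul C) ?_
    · refine Eventually.of_forall fun z => AEStronglyMeasurable.mul ?_ integrableOn_gammaW.1
      have h1 : Measurable fun x : ℝ => ⌈(√(2 * x / z) - 1 / 2) / 2⌉₊ :=
        Nat.measurable_ceil.comp (by fun_prop)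
      exact ((measurable_from_nat (f := fun n => ∑ j ∈ Finset.range n, eta j)).comp
        h1).aestronglyMeasurable
    · refine Eventually.of_forall fun z => ?_
      filter_upwards [ae_restrict_mem measurableSet_Ioi] with x hx
      rw [norm_mul, Real.norm_of_nonneg (gammaW_nonneg hx)]
      exact mul_le_mul_of_nonneg_right (hC _ (mem_range_self _)) (gammaW_nonneg hx)
    · filter_upwards [ae_restrict_mem measurableSet_Ioi] with x hx
      exact (tendsto_sum_eta.comp (tendsto_cutoff hx)).mul_const _
  have h := (hlim.const_mul √(2 / π)).congr' (f₂ := gammaSeries) (by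
    filter_upwards [self_mem_nhdsWithin] with z hz using (gammaSeries_eq_integral hz).symm)
  convert h using 2
  rw [integral_const_mul, integral_gammaW, Real.sqrt_div (by norm_num)]
  field_simp

/-- If the positive part of `f_S` has mass at most one, then on each `(0, z⁻¹)` it has the same
integral as `f_S`: the negative parts have increasing mass, which tends to zero because the
integrals of `f_S` tend to one. -/
lemma lintegral_fS (htot : ∫⁻ s, ENNReal.ofReal (fS s) ≤ 1) {z : ℝ} (hz : 0 < z) :
    0 ≤ gammaSeries z ∧
      ∫⁻ s in Ioo 0 z⁻¹, ENNReal.ofReal (fS s) = ENNReal.ofReal (gammaSeries z) := by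
  have hpos (y : ℝ) (hy : 0 < y) : ∫⁻ s in Ioo 0 y⁻¹, ENNReal.ofReal (fS s)
      = ENNReal.ofReal (∫ s in Ioo 0 y⁻¹, max (fS s) 0) := by
    rw [ofReal_integral_eq_lintegral_ofReal (fS_integral hy).1.pos_part
      (Eventually.of_forall fun s => le_max_right _ _)]
    refine lintegral_congr fun s => ?_
    rw [ENNReal.ofReal_max, ENNReal.ofReal_zero, max_eq_left zero_le]
  have hle (y : ℝ) (hy : 0 < y) : ∫ s in Ioo 0 y⁻¹, max (fS s) 0 ≤ 1 := by
    have := (setLIntegral_le_lintegral (Ioo 0 y⁻¹) _).trans htot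
    rw [hpos y hy] at this
    exact ENNReal.ofReal_le_one.1 this
  have hsplit (y : ℝ) (hy : 0 < y) : ∫ s in Ioo 0 y⁻¹, max (-fS s) 0
      = (∫ s in Ioo 0 y⁻¹, max (fS s) 0) - gammaSeries y := by
    rw [← (fS_integral hy).2, ← integral_sub (fS_integral hy).1.pos_part (fS_integral hy).1]
    refine integral_congr_ae (Eventually.of_forall fun s => ?_)
    simp only
    rcases le_total (fS s) 0 with h | h
    · rw [max_eq_right h, max_eq_left (by linarith)]; ring
    · rw [max_eq_left h, max_eq_right (by linarith)]; ring
  have hneg0 : 0 ≤ ∫ s in Ioo 0 z⁻¹, max (-fS s) 0 :=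
    integral_nonneg fun s => le_max_right _ _
  have hneg : ∫ s in Ioo 0 z⁻¹, max (-fS s) 0 ≤ 0 := by
    have hlim : Tendsto (fun y => 1 - gammaSeries y) (𝓝[>] 0) (𝓝 0) := by
      simpa using tendsto_gammaSeries.const_sub 1
    refine ge_of_tendsto hlim ?_
    filter_upwards [Ioo_mem_nhdsGT hz] with y hy
    have hmono : ∫ s in Ioo 0 z⁻¹, max (-fS s) 0 ≤ ∫ s in Ioo 0 y⁻¹, max (-fS s) 0 := by
      refine setIntegral_mono_set (fS_integral hy.1).1.neg.pos_part
        (Eventually.of_forall fun s => le_max_right _ _) ?_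
      exact (Ioo_subset_Ioo_right (inv_anti₀ hy.1 hy.2.le)).eventuallyLE
    linarith [hsplit y hy.1, hle y hy.1]
  have heq : ∫ s in Ioo 0 z⁻¹, max (fS s) 0 = gammaSeries z := by
    linarith [hsplit z hz]
  exact ⟨heq ▸ integral_nonneg fun s => le_max_right _ _, by rw [hpos z hz, heq]⟩

/-! ### The distribution function -/

/-- The c.d.f. part of Theorem 6.1 of Franchi–Paruolo:
`F_ζ(z) = 1 − √(2/π) Σ_j η_j Γ(1/2, a_j² z / 2)` for `z > 0`, where `ζ = 1/S`. -/
theorem stmt13 {Ω : Type*} [MeasurableSpace Ω] (P : Measure Ω) [IsProbabilityMeasure P]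
    (S : Ω → ℝ) (hS : Measurable S)
    (hSpos : P {ω | S ω ≤ 0} = 0)
    (hlaw : P.map S = volume.withDensity (fun s => ENNReal.ofReal (fS s))) :
    ∀ z : ℝ, 0 < z →
      P {ω | (S ω)⁻¹ ≤ z} =
        ENNReal.ofReal (1 - Real.sqrt (2 / π) *
          ∑' j : ℕ, eta j *
            ∫ x in Set.Ioi ((aC j) ^ 2 * z / 2), x ^ (-(1 : ℝ) / 2) * Real.exp (-x)) := by

  intro z hz
  have htot : ∫⁻ s, ENNReal.ofReal (fS s) ≤ 1 := by
    rw [← setLIntegral_univ, ← withDensity_apply _ MeasurableSet.univ, ← hlaw,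
      Measure.map_apply hS MeasurableSet.univ]
    exact prob_le_one
  obtain ⟨h0, hI⟩ := lintegral_fS htot hz
  have hset : {ω | (S ω)⁻¹ ≤ z} = (S ⁻¹' Ioo 0 z⁻¹)ᶜ := by
    ext ω
    simp only [mem_ofPred_eq, mem_compl_iff, mem_preimage, mem_Ioo, not_and, not_lt]
    constructor
    · intro h hpos
      exact inv_le_of_inv_le₀ hpos h
    · intro h
      rcases le_or_gt (S ω) 0 with hn | hp
      · exact (inv_nonpos.2 hn).trans hz.le
      · exact inv_le_of_inv_le₀ hz (h hp)
  rw [hset, prob_compl_eq_one_sub (hS measurableSet_Ioo),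
    ← Measure.map_apply hS measurableSet_Ioo, hlaw, withDensity_apply _ measurableSet_Ioo, hI,
    ← ENNReal.ofReal_one, ← ENNReal.ofReal_sub _ h0]
  rfl
end
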